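/- arXiv:1810.00877 — 3 statements merged into one kernel-verified Lean document; each statement's English description precedes it below -/
import Mathlib

section
/- Fix ε > 0 and Δ > 0. Then the minimum noise amplitude satisfies liminf_{δ → 0⁺} V_opt^{L1}(ε, δ, Δ) ≥ Δ/(e^ε − 1) and limsup_{δ → 0⁺} V_opt^{L1}(ε, δ, Δ) ≤ Δ/ε, so the multiplicative gap between these limiting lower and upper bounds is ε/(e^ε − 1) = 1 − ε/2 + O(ε²). -/
open MeasureTheory Real Filter Topology

/-- The (ε,δ)-differential-privacy constraint with sensitivity `Δ` on a noise
distribution `P` on ℝ. -/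
def SatisfiesDP (ε δ Δ : ℝ) (P : Measure ℝ) : Prop :=
  ∀ d : ℝ, |d| ≤ Δ → ∀ S : Set ℝ, MeasurableSet S →
    P S ≤ ENNReal.ofReal (Real.exp ε) * P ((fun s => s + d) '' S) + ENNReal.ofReal δ

/-- The minimum noise amplitude. -/
noncomputable def VoptL1 (ε δ Δ : ℝ) : ENNReal :=
  ⨅ (P : Measure ℝ) (_ : IsProbabilityMeasure P) (_ : SatisfiesDP ε δ Δ P),
    ∫⁻ x : ℝ, ENNReal.ofReal |x| ∂P

lemma lap_int0 (b : ℝ) (hb : 0 < b) : ∫ x : ℝ, b / 2 * Real.exp (-(b * |x|)) = 1 := by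
  rw [integral_comp_abs (f := fun x => b / 2 * Real.exp (-(b * x))), integral_const_mul]
  have h := Real.integral_rpow_mul_exp_neg_mul_Ioi (a := 1) (r := b) one_pos hb
  simp at h
  rw [h]; field_simp

lemma lap_int1 (b : ℝ) (hb : 0 < b) :
    ∫ x : ℝ, b / 2 * Real.exp (-(b * |x|)) * |x| = 1 / b := by
  rw [integral_comp_abs (f := fun x => b / 2 * Real.exp (-(b * x)) * x)]
  have h := Real.integral_rpow_mul_exp_neg_mul_Ioi (a := 2) (r := b) two_pos hb
  have e : ∀ x : ℝ, b / 2 * Real.exp (-(b * x)) * x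
      = b / 2 * (x ^ ((2:ℝ) - 1) * Real.exp (-(b * x))) := by
    intro x; norm_num; ring
  simp_rw [e]
  rw [integral_const_mul, h]
  norm_num
  field_simp

lemma lap_dens_meas (b : ℝ) :
    Measurable (fun x : ℝ => ENNReal.ofReal (b / 2 * Real.exp (-(b * |x|)))) := by
  fun_prop

lemma Vopt_upper (ε Δ δ : ℝ) (hε : 0 < ε) (hΔ : 0 < Δ) :
    VoptL1 ε δ Δ ≤ ENNReal.ofReal (Δ / ε) := by
  set b := ε / Δ with hbdef
  have hb : 0 < b := by positivity
  have hm := lap_dens_meas b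
  set f : ℝ → ENNReal := fun x : ℝ => ENNReal.ofReal (b / 2 * Real.exp (-(b * |x|))) with hf
  have h0 := lap_int0 b hb
  have h1 := lap_int1 b hb
  have i0 : Integrable (fun x : ℝ => b / 2 * Real.exp (-(b * |x|))) := by
    by_contra h
    rw [integral_undef h] at h0
    norm_num at h0
  have i1 : Integrable (fun x : ℝ => b / 2 * Real.exp (-(b * |x|)) * |x|) := by
    by_contra h
    rw [integral_undef h] at h1
    have : 0 < 1 / b := by positivity
    linarith
  unfold VoptL1
  refine iInf_le_of_le (volume.withDensity f) (iInf_le_of_le ?_ (iInf_le_of_le ?_ ?_))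
  · constructor
    rw [withDensity_apply _ MeasurableSet.univ, Measure.restrict_univ,
      ← ofReal_integral_eq_lintegral_ofReal i0 (ae_of_all _ fun x => by positivity), h0]
    simp
  · intro d hd S hS
    refine le_trans ?_ le_self_add
    have hS' : MeasurableSet ((fun s => s + d) '' S) := by
      rw [Set.image_add_right]
      exact (measurable_add_const _) hS
    rw [withDensity_apply _ hS, withDensity_apply _ hS']
    have e2 : ∫⁻ x in (fun s => s + d) '' S, f x = ∫⁻ x in S, f (x + d) := by
      have := (measurePreserving_add_right (volume : Measure ℝ) d).setLIntegral_comp_emb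
        (measurableEmbedding_addRight d) f S
      exact this.symm
    rw [e2, ← lintegral_const_mul _ (by fun_prop)]
    refine lintegral_mono fun x => ?_
    simp only [hf]
    rw [← ENNReal.ofReal_mul (Real.exp_pos _).le]
    apply ENNReal.ofReal_le_ofReal
    have h3 : Real.exp (-(b * |x|)) ≤ Real.exp ε * Real.exp (-(b * |x + d|)) := by
      rw [← Real.exp_add]
      apply Real.exp_le_exp.2
      have h4 : |x + d| ≤ |x| + Δ := (abs_add_le x d).trans (by linarith)
      have h5 : b * |x + d| ≤ b * (|x| + Δ) := by gcongr
      have h6 : b * Δ = ε := by rw [hbdef]; field_simp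
      linarith
    have : 0 < b / 2 := by positivity
    nlinarith
  · rw [lintegral_withDensity_eq_lintegral_mul _ hm (by fun_prop)]
    have : ∀ x : ℝ, (f * fun x => ENNReal.ofReal |x|) x
        = ENNReal.ofReal (b / 2 * Real.exp (-(b * |x|)) * |x|) := by
      intro x
      rw [Pi.mul_apply, hf, ← ENNReal.ofReal_mul (by positivity)]
    simp_rw [this]
    rw [← ofReal_integral_eq_lintegral_ofReal i1 (ae_of_all _ fun x => by positivity), h1]
    apply ENNReal.ofReal_le_ofReal
    rw [hbdef]; simp

/-- Real-valued form of the privacy constraint. -/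
lemma dp_real {ε δ Δ : ℝ} (hδ : 0 ≤ δ) {P : Measure ℝ} [IsProbabilityMeasure P]
    (h : SatisfiesDP ε δ Δ P) (d : ℝ) (hd : |d| ≤ Δ) (S T : Set ℝ) (hS : MeasurableSet S)
    (hST : ∀ s ∈ S, s + d ∈ T) :
    Real.exp (-ε) * (P.real S - δ) ≤ P.real T := by
  have h1 := h d hd S hS
  have h2 : P ((fun s => s + d) '' S) ≤ P T := by
    apply measure_mono
    rintro _ ⟨s, hs, rfl⟩
    exact hST s hs
  have h3 : P S ≤ ENNReal.ofReal (Real.exp ε) * P T + ENNReal.ofReal δ := by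
    refine h1.trans ?_
    gcongr
  have h4 : P.real S ≤ Real.exp ε * P.real T + δ := by
    have := ENNReal.toReal_mono (by finiteness) h3
    rw [ENNReal.toReal_add (by finiteness) (by finiteness), ENNReal.toReal_mul,
      ENNReal.toReal_ofReal (Real.exp_pos _).le, ENNReal.toReal_ofReal hδ] at this
    exact this
  have h5 : Real.exp (-ε) * (P.real S - δ) ≤ Real.exp (-ε) * (Real.exp ε * P.real T) := by
    gcongr; linarith
  rwa [← mul_assoc, ← Real.exp_add, neg_add_cancel, Real.exp_zero, one_mul] at h5

lemma tail_split (P : Measure ℝ) [IsProbabilityMeasure P] (t : ℝ) (ht : 0 < t) :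
    P.real {x | t ≤ |x|} = P.real (Set.Ici t) + P.real (Set.Iic (-t)) := by
  rw [← measureReal_union _ measurableSet_Iic]
  · congr 1
    ext x
    simp only [Set.mem_ofPred_eq, Set.mem_union, Set.mem_Ici, Set.mem_Iic, le_abs]
    constructor <;> rintro (h | h) <;> [left; right; left; right] <;> linarith
  · rw [Set.disjoint_left]
    intro x hx hx'
    simp only [Set.mem_Ici, Set.mem_Iic] at hx hx'
    linarith

lemma tail_rec {ε δ Δ : ℝ} (hΔ : 0 < Δ) (hδ : 0 ≤ δ) {P : Measure ℝ} [IsProbabilityMeasure P]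
    (h : SatisfiesDP ε δ Δ P) (t : ℝ) (ht : 0 < t) :
    Real.exp (-ε) * (P.real {x | t ≤ |x|} - 2 * δ) ≤ P.real {x | t + Δ ≤ |x|} := by
  rw [tail_split P t ht, tail_split P (t + Δ) (by linarith)]
  have h1 := dp_real hδ h Δ (abs_of_pos hΔ).le (Set.Ici t) (Set.Ici (t + Δ)) measurableSet_Ici
    (fun s hs => by simp only [Set.mem_Ici] at *; linarith)
  have h2 := dp_real hδ h (-Δ) (by rw [abs_neg, abs_of_pos hΔ]) (Set.Iic (-t))
    (Set.Iic (-(t + Δ))) measurableSet_Iic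
    (fun s hs => by simp only [Set.mem_Iic] at *; linarith)
  linarith

lemma tail_base {ε δ Δ : ℝ} (hε : 0 < ε) (hΔ : 0 < Δ) (hδ : 0 ≤ δ) {P : Measure ℝ}
    [IsProbabilityMeasure P] (h : SatisfiesDP ε δ Δ P) (t : ℝ) (ht : 0 < t) (ht' : t < Δ) :
    2 * Real.exp (-ε) * (1 - δ) ≤ P.real {x | t ≤ |x|} + P.real {x | Δ - t ≤ |x|} := by
  rw [tail_split P t ht, tail_split P (Δ - t) (by linarith)]
  have h1 := dp_real hδ h Δ (abs_of_pos hΔ).le (Set.Iic (-(Δ - t)))ᶜ (Set.Ici t)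
    measurableSet_Iic.compl
    (fun s hs => by simp only [Set.mem_Ici, Set.mem_compl_iff, Set.mem_Iic, not_le] at *; linarith)
  have h2 := dp_real hδ h (-Δ) (by rw [abs_neg, abs_of_pos hΔ]) (Set.Ici (Δ - t))ᶜ
    (Set.Iic (-t)) measurableSet_Ici.compl
    (fun s hs => by simp only [Set.mem_Ici, Set.mem_compl_iff, Set.mem_Iic, not_le] at *; linarith)
  rw [probReal_compl_eq_one_sub measurableSet_Iic] at h1
  rw [probReal_compl_eq_one_sub measurableSet_Ici] at h2
  have q1 : Real.exp (-ε) ≤ 1 := Real.exp_le_one_iff.2 (by linarith)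
  have q0 := Real.exp_pos (-ε)
  have a1 : 0 ≤ P.real (Set.Iic (-(Δ - t))) := measureReal_nonneg
  have a2 : 0 ≤ P.real (Set.Ici (Δ - t)) := measureReal_nonneg
  nlinarith

lemma Vopt_lower (ε Δ δ : ℝ) (hε : 0 < ε) (hΔ : 0 < Δ) (hδ : 0 < δ) (N : ℕ) :
    ENNReal.ofReal (∑ k ∈ Finset.range N, (Real.exp (-ε) ^ k * (Real.exp (-ε) * Δ * (1 - δ))
      - k * (2 * δ * Δ))) ≤ VoptL1 ε δ Δ := by
  unfold VoptL1
  refine le_iInf fun P => le_iInf fun hP => le_iInf fun h => ?_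
  set q := Real.exp (-ε) with hq
  have q1 : q ≤ 1 := Real.exp_le_one_iff.2 (by linarith)
  have q0 : 0 < q := Real.exp_pos (-ε)
  set G : ℝ → ℝ := fun t => P.real {x | t ≤ |x|} with hG
  have hanti : Antitone G := by
    intro s t hst
    refine measureReal_mono ?_
    intro x hx
    exact le_trans hst hx
  have hint : ∀ a b : ℝ, IntervalIntegrable G volume a b := fun a b =>
    hanti.intervalIntegrable
  have hint2 : ∀ c a b : ℝ, IntervalIntegrable (fun t => G (t + c)) volume a b := fun c a b =>
    Antitone.intervalIntegrable (fun s t hst => hanti (by linarith))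
  have hint3 : IntervalIntegrable (fun t => G (Δ - t)) volume 0 Δ :=
    Monotone.intervalIntegrable (fun s t hst => hanti (by linarith))
  -- base
  have hbase : q * Δ * (1 - δ) ≤ ∫ t in (0:ℝ)..Δ, G t := by
    have e : ∫ t in (0:ℝ)..Δ, G (Δ - t) = ∫ t in (0:ℝ)..Δ, G t := by
      rw [intervalIntegral.integral_comp_sub_left (fun t => G t)]; simp
    have h1 : ∫ t in (0:ℝ)..Δ, (2 * q * (1 - δ)) ≤ ∫ t in (0:ℝ)..Δ, (G t + G (Δ - t)) := by
      apply intervalIntegral.integral_mono_on_of_le_Ioo hΔ.le (by simp) ((hint _ _).add hint3)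
      intro t ht
      exact tail_base hε hΔ hδ.le h t ht.1 ht.2
    rw [intervalIntegral.integral_add (hint _ _) hint3, e, intervalIntegral.integral_const,
      smul_eq_mul] at h1
    linarith
  have hk : ∀ k : ℕ, q ^ k * (q * Δ * (1 - δ)) - k * (2 * δ * Δ)
      ≤ ∫ t in (0:ℝ)..Δ, G (t + k * Δ) := by
    intro k
    induction k with
    | zero => simpa using hbase
    | succ k ih =>
      have h1 : ∫ t in (0:ℝ)..Δ, q * (G (t + k * Δ) - 2 * δ)
          ≤ ∫ t in (0:ℝ)..Δ, G (t + (k + 1 : ℕ) * Δ) := by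
        apply intervalIntegral.integral_mono_on_of_le_Ioo hΔ.le
          (((hint2 _ _ _).sub (by simp)).const_mul _) (hint2 _ _ _)
        intro t ht
        have := tail_rec hΔ hδ.le h (t + k * Δ) (by have := ht.1; positivity)
        rw [add_assoc] at this
        have e : (k:ℝ) * Δ + Δ = ((k + 1 : ℕ) : ℝ) * Δ := by push_cast; ring
        rw [e] at this
        exact this
      rw [intervalIntegral.integral_const_mul, intervalIntegral.integral_sub (hint2 _ _ _)
        (by simp), intervalIntegral.integral_const, smul_eq_mul] at h1
      refine le_trans ?_ h1
      have h2 : q * (q ^ k * (q * Δ * (1 - δ)) - k * (2 * δ * Δ) - (Δ - 0) * (2 * δ))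
          ≤ q * ((∫ t in (0:ℝ)..Δ, G (t + k * Δ)) - (Δ - 0) * (2 * δ)) := by gcongr
      refine le_trans ?_ h2
      have h3 : q * ((k + 1) * (2 * δ * Δ)) ≤ 1 * ((k + 1) * (2 * δ * Δ)) := by gcongr
      push_cast
      rw [pow_succ]
      nlinarith
  have hsum : ∑ k ∈ Finset.range N, (q ^ k * (q * Δ * (1 - δ)) - k * (2 * δ * Δ))
      ≤ ∫ t in (0:ℝ)..(N * Δ), G t := by
    have := intervalIntegral.sum_integral_adjacent_intervals (f := G) (μ := volume)
      (a := fun k : ℕ => (k:ℝ) * Δ) (n := N) (fun k _ => hint _ _)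
    simp only [Nat.cast_zero, zero_mul] at this
    rw [← this]
    apply Finset.sum_le_sum
    intro k _
    refine (hk k).trans (le_of_eq ?_)
    rw [intervalIntegral.integral_comp_add_right]
    congr 1 <;> push_cast <;> ring
  have hN : (0:ℝ) ≤ N * Δ := by positivity
  calc _ ≤ ENNReal.ofReal (∫ t in (0:ℝ)..(N * Δ), G t) := ENNReal.ofReal_le_ofReal hsum
    _ = ∫⁻ t in Set.Ioc 0 (N * Δ), ENNReal.ofReal (G t) := by
      rw [intervalIntegral.integral_of_le hN, ofReal_integral_eq_lintegral_ofReal]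
      · exact (intervalIntegrable_iff_integrableOn_Ioc_of_le hN).1 (hint _ _)
      · exact ae_of_all _ fun x => measureReal_nonneg
    _ ≤ ∫⁻ t in Set.Ioi 0, ENNReal.ofReal (G t) :=
      lintegral_mono_set Set.Ioc_subset_Ioi_self
    _ = ∫⁻ t in Set.Ioi 0, P {x | t ≤ |x|} := by
      refine lintegral_congr fun t => ?_
      exact ofReal_measureReal
    _ = _ := by
      rw [lintegral_eq_lintegral_meas_le P (f := fun x => |x|) (ae_of_all _ fun x => abs_nonneg x)
        (by fun_prop)]

lemma Vopt_liminf (ε Δ : ℝ) (hε : 0 < ε) (hΔ : 0 < Δ) :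
    ENNReal.ofReal (Δ / (Real.exp ε - 1)) ≤
      Filter.liminf (fun δ : ℝ => VoptL1 ε δ Δ) (nhdsWithin 0 (Set.Ioi 0)) := by
  set q := Real.exp (-ε) with hq
  have q1 : q < 1 := by rw [hq]; exact Real.exp_lt_one_iff.2 (by linarith)
  have q0 : 0 < q := Real.exp_pos (-ε)
  have hN : ∀ N : ℕ, ENNReal.ofReal (∑ k ∈ Finset.range N, q ^ k * (q * Δ)) ≤
      Filter.liminf (fun δ : ℝ => VoptL1 ε δ Δ) (nhdsWithin 0 (Set.Ioi 0)) := by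
    intro N
    have hc : Continuous (fun δ : ℝ => ENNReal.ofReal (∑ k ∈ Finset.range N,
        (q ^ k * (q * Δ * (1 - δ)) - k * (2 * δ * Δ)))) :=
      ENNReal.continuous_ofReal.comp (by fun_prop)
    have ht := (hc.tendsto 0).mono_left (nhdsWithin_le_nhds (s := Set.Ioi 0))
    have hl := ht.liminf_eq
    simp only [sub_zero, mul_one, mul_zero, zero_mul] at hl
    rw [← hl]
    refine Filter.liminf_le_liminf ?_
    filter_upwards [self_mem_nhdsWithin] with δ hδ
    exact Vopt_lower ε Δ δ hε hΔ hδ N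
  have hs : HasSum (fun k : ℕ => q ^ k * (q * Δ)) ((1 - q)⁻¹ * (q * Δ)) :=
    (hasSum_geometric_of_lt_one q0.le q1).mul_right _
  have he : (1 - q)⁻¹ * (q * Δ) = Δ / (Real.exp ε - 1) := by
    have e1 : Real.exp ε = q⁻¹ := by rw [hq, Real.exp_neg, inv_inv]
    rw [e1]
    have : (1 - q) ≠ 0 := by linarith
    have h2 : q⁻¹ - 1 = (1 - q) / q := by field_simp
    rw [h2]
    field_simp
  rw [← he]
  exact le_of_tendsto (ENNReal.tendsto_ofReal hs.tendsto_sum_nat) (Eventually.of_forall hN)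

/-- For fixed ε > 0 and Δ > 0, as δ → 0⁺ the minimum noise amplitude
satisfies liminf ≥ Δ/(e^ε − 1) and limsup ≤ Δ/ε, with multiplicative gap
ε/(e^ε − 1). -/
theorem VoptL1_asymptotics_delta_to_zero
    (ε Δ : ℝ) (hε : 0 < ε) (hΔ : 0 < Δ) :
    Filter.liminf (fun δ : ℝ => VoptL1 ε δ Δ) (nhdsWithin 0 (Set.Ioi 0))
        ≥ ENNReal.ofReal (Δ / (Real.exp ε - 1))
      ∧ Filter.limsup (fun δ : ℝ => VoptL1 ε δ Δ) (nhdsWithin 0 (Set.Ioi 0))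
        ≤ ENNReal.ofReal (Δ / ε)
      ∧ (Δ / (Real.exp ε - 1)) / (Δ / ε) = ε / (Real.exp ε - 1) := by
  refine ⟨Vopt_liminf ε Δ hε hΔ, ?_, ?_⟩
  · refine (Filter.limsup_le_limsup
      (Eventually.of_forall fun δ => Vopt_upper ε Δ δ hε hΔ)).trans ?_
    simp
  · have : Real.exp ε - 1 ≠ 0 := by
      have := Real.one_lt_exp_iff.2 hε
      linarith
    field_simp
end

section
/- Fix δ ∈ (0, 1/2) and Δ > 0. Then the minimum noise power satisfies liminf_{ε → 0⁺} V_opt^{L2}(ε, δ, Δ) ≥ (Δ²/12)·(1/δ − 1)·(1/δ − 2) and limsup_{ε → 0⁺} V_opt^{L2}(ε, δ, Δ) ≤ Δ²/(12δ²), so the ratio of the limiting lower and upper bounds is at least (1 − δ)(1 − 2δ). -/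
open MeasureTheory Real Filter Topology

/-- The minimum noise power. -/
noncomputable def VoptL2 (ε δ Δ : ℝ) : ENNReal :=
  ⨅ (P : Measure ℝ) (_ : IsProbabilityMeasure P) (_ : SatisfiesDP ε δ Δ P),
    ∫⁻ x : ℝ, ENNReal.ofReal (x ^ 2) ∂P


lemma interval_mass {ε δ Δ : ℝ} (hε : 0 < ε) (hδ0 : 0 < δ) (hΔ : 0 < Δ) (P : Measure ℝ)
    [IsProbabilityMeasure P] (h : SatisfiesDP ε δ Δ P) (x : ℝ) :
    P.real (Set.Ico x (x + Δ)) ≤ δ + (Real.exp ε - 1) := by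
  have h1 := h Δ (abs_of_pos hΔ).le (Set.Ici x) measurableSet_Ici
  rw [Set.image_add_const_Ici] at h1
  have h2 : P.real (Set.Ici x) ≤ Real.exp ε * P.real (Set.Ici (x + Δ)) + δ := by
    have h3 : ENNReal.ofReal (Real.exp ε) * P (Set.Ici (x + Δ)) + ENNReal.ofReal δ
        = ENNReal.ofReal (Real.exp ε * P.real (Set.Ici (x + Δ)) + δ) := by
      rw [ENNReal.ofReal_add (by positivity) hδ0.le, ENNReal.ofReal_mul (by positivity),
        ofReal_measureReal]
    rw [h3] at h1
    exact ENNReal.toReal_le_of_le_ofReal (by positivity) h1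
  have h4 : P.real (Set.Ici x) = P.real (Set.Ico x (x + Δ)) + P.real (Set.Ici (x + Δ)) := by
    rw [← measureReal_union _ measurableSet_Ici]
    · rw [Set.Ico_union_Ici_eq_Ici (by linarith)]
    · rw [Set.disjoint_left]
      intro a ha hb
      exact absurd ha.2 (not_lt.2 hb)
  have h5 : P.real (Set.Ici (x + Δ)) ≤ 1 := measureReal_le_one
  have h6 : 1 ≤ Real.exp ε := Real.one_le_exp hε.le
  nlinarith

lemma intervals_mass {δ Δ : ℝ} (P : Measure ℝ)
    [IsProbabilityMeasure P] (h : ∀ x, P.real (Set.Ico x (x + Δ)) ≤ δ) (x : ℝ) (n : ℕ) :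
    P.real (Set.Ico x (x + n * Δ)) ≤ n * δ := by
  induction n with
  | zero => simp
  | succ n ih =>
    have : Set.Ico x (x + (n + 1 : ℕ) * Δ) ⊆
        Set.Ico x (x + n * Δ) ∪ Set.Ico (x + n * Δ) (x + n * Δ + Δ) := by
      intro a ha
      have h1 := ha.1
      have h2 := ha.2
      push_cast at h2
      by_cases hh : a < x + n * Δ
      · exact Or.inl ⟨h1, hh⟩
      · exact Or.inr ⟨not_lt.1 hh, by linarith⟩
    have h3 := (measureReal_mono (μ := P) this).trans (measureReal_union_le _ _)
    have h4 := h (x + n * Δ)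
    have h5 : ((n + 1 : ℕ) : ℝ) * δ = n * δ + δ := by push_cast; ring
    linarith

lemma tail_mass {δ Δ : ℝ} (hδ0 : 0 < δ) (hΔ : 0 < Δ) (P : Measure ℝ)
    [IsProbabilityMeasure P] (h : ∀ x, P.real (Set.Ico x (x + Δ)) ≤ δ) (t : ℝ) (ht : 0 < t) :
    1 - δ * (2 * t / Δ + 1) ≤ P.real {x : ℝ | t ≤ |x|} := by
  have h1 := intervals_mass P h (-t) ⌈2 * t / Δ⌉₊
  have h2 : (⌈2 * t / Δ⌉₊ : ℝ) ≤ 2 * t / Δ + 1 := (Nat.ceil_lt_add_one (by positivity)).le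
  have h3 : 2 * t ≤ ⌈2 * t / Δ⌉₊ * Δ := by
    rw [← div_le_iff₀ hΔ]; exact Nat.le_ceil _
  have hsub : (Set.univ : Set ℝ) ⊆ Set.Ico (-t) (-t + ⌈2 * t / Δ⌉₊ * Δ) ∪ {x : ℝ | t ≤ |x|} := by
    intro a _
    by_cases ha : t ≤ |a|
    · exact Or.inr ha
    · have := abs_lt.1 (not_le.1 ha)
      exact Or.inl ⟨this.1.le, by linarith⟩
  have h4 := (measureReal_mono (μ := P) hsub).trans (measureReal_union_le _ _)
  rw [probReal_univ] at h4
  nlinarith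

lemma lower_bound {δ Δ : ℝ} (hδ0 : 0 < δ) (hδ : δ < 1 / 2) (hΔ : 0 < Δ) (P : Measure ℝ)
    [IsProbabilityMeasure P] (h : ∀ x, P.real (Set.Ico x (x + Δ)) ≤ δ) :
    ENNReal.ofReal ((Δ ^ 2 / 12) * (1 / δ - 1) * (1 / δ - 2))
      ≤ ∫⁻ x : ℝ, ENNReal.ofReal (x ^ 2) ∂P := by
  have key := lintegral_comp_eq_lintegral_meas_le_mul P (f := fun x : ℝ => |x|)
    (g := fun t => 2 * t) (Eventually.of_forall fun x => abs_nonneg x)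
    (measurable_id.abs.aemeasurable)
    (fun t _ => (by fun_prop : Continuous fun t : ℝ => 2 * t).intervalIntegrable _ _)
    (by
      filter_upwards [ae_restrict_mem measurableSet_Ioi] with t ht
      have : (0:ℝ) < t := ht
      positivity)
  have e1 : ∀ x : ℝ, ∫ t in (0:ℝ)..|x|, 2 * t = x ^ 2 := by
    intro x
    rw [intervalIntegral.integral_const_mul, integral_id, sq_abs]; ring
  simp only [e1] at key
  rw [key]
  set T : ℝ := Δ * (1 / δ - 1) / 2 with hT
  have hd : 2 < 1 / δ := by rw [lt_div_iff₀ hδ0]; linarith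
  have hT0 : 0 < T := by
    have : 0 < 1 / δ - 1 := by linarith
    positivity
  have hpt : ∀ t ∈ Set.Ioc 0 T, ENNReal.ofReal ((1 - δ * (2 * t / Δ + 1)) * (2 * t)) ≤
      P {a : ℝ | t ≤ |a|} * ENNReal.ofReal (2 * t) := by
    intro t ht
    rw [ENNReal.ofReal_mul' (by linarith [ht.1])]
    gcongr
    rw [← ofReal_measureReal]
    exact ENNReal.ofReal_le_ofReal (tail_mass hδ0 hΔ P h t ht.1)
  have hnn : ∀ t ∈ Set.Ioc 0 T, 0 ≤ (1 - δ * (2 * t / Δ + 1)) * (2 * t) := by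
    intro t ht
    have h1 := ht.1
    have h2 := ht.2
    have : δ * (2 * t / Δ + 1) ≤ δ * (2 * T / Δ + 1) := by gcongr
    have h3 : δ * (2 * T / Δ + 1) = 1 := by rw [hT]; field_simp; ring
    apply mul_nonneg <;> linarith
  have hcont : Continuous fun t : ℝ => (1 - δ * (2 * t / Δ + 1)) * (2 * t) := by fun_prop
  have hint : ∫ t in Set.Ioc 0 T, (1 - δ * (2 * t / Δ + 1)) * (2 * t)
      = Δ ^ 2 / 12 * (δ * (1 / δ - 1) ^ 3) := by
    rw [← intervalIntegral.integral_of_le hT0.le]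
    have hder : ∀ t ∈ Set.uIcc 0 T, HasDerivAt
        (fun t : ℝ => (1 - δ) * t ^ 2 - 4 * δ / (3 * Δ) * t ^ 3)
        ((1 - δ * (2 * t / Δ + 1)) * (2 * t)) t := by
      intro t _
      have := ((hasDerivAt_pow 2 t).const_mul (1 - δ)).sub
        ((hasDerivAt_pow 3 t).const_mul (4 * δ / (3 * Δ)))
      refine this.congr_deriv ?_
      push_cast
      field_simp
      ring
    rw [intervalIntegral.integral_eq_sub_of_hasDerivAt hder (hcont.intervalIntegrable _ _), hT]
    field_simp
    ring
  calc ENNReal.ofReal ((Δ ^ 2 / 12) * (1 / δ - 1) * (1 / δ - 2))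
      ≤ ENNReal.ofReal (Δ ^ 2 / 12 * (δ * (1 / δ - 1) ^ 3)) := by
        apply ENNReal.ofReal_le_ofReal
        rw [mul_assoc]
        apply mul_le_mul_of_nonneg_left _ (by positivity)
        have : δ * (1 / δ - 1) ^ 3 = (1 / δ - 1) * (1 / δ - 2 + δ) := by field_simp; ring
        rw [this]
        apply mul_le_mul_of_nonneg_left <;> linarith
    _ = ∫⁻ t in Set.Ioc 0 T, ENNReal.ofReal ((1 - δ * (2 * t / Δ + 1)) * (2 * t)) := by
        rw [← hint, ofReal_integral_eq_lintegral_ofReal]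
        · exact (hcont.integrableOn_Ioc)
        · filter_upwards [ae_restrict_mem measurableSet_Ioc] with t ht using hnn t ht
    _ ≤ ∫⁻ t in Set.Ioc 0 T, P {a : ℝ | t ≤ |a|} * ENNReal.ofReal (2 * t) :=
        setLIntegral_mono' measurableSet_Ioc hpt
    _ ≤ _ := lintegral_mono_set Set.Ioc_subset_Ioi_self

lemma upper_bound {ε δ Δ : ℝ} (hε : 0 < ε) (hδ0 : 0 < δ) (hΔ : 0 < Δ) :
    VoptL2 ε δ Δ ≤ ENNReal.ofReal (Δ ^ 2 / (12 * δ ^ 2)) := by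
  set R : ℝ := Δ / (2 * δ) with hR
  have hR0 : 0 < R := by positivity
  set I : Set ℝ := Set.Ioc (-R) R with hI
  have hIm : MeasurableSet I := measurableSet_Ioc
  set P : Measure ℝ := ENNReal.ofReal (δ / Δ) • volume.restrict I with hP
  have hprob : IsProbabilityMeasure P := by
    constructor
    rw [hP, Measure.smul_apply, Measure.restrict_apply_univ, Real.volume_Ioc, smul_eq_mul,
      ← ENNReal.ofReal_mul (by positivity)]
    rw [← ENNReal.ofReal_one]
    congr 1
    rw [hR]; field_simp; ring
  have hDP : SatisfiesDP ε δ Δ P := by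
    intro d hd S hS
    have himg : ∀ A : Set ℝ, volume ((fun s => s + d) '' A) = volume A := by
      intro A
      rw [Set.image_add_right]; exact measure_preimage_add_right _ _ _
    have hSd : MeasurableSet ((fun s => s + d) '' S) :=
      (measurableEmbedding_addRight d).measurableSet_image' hS
    have hsub : (fun s => s + d) '' (S ∩ I) ⊆
        ((fun s => s + d) '' S ∩ I) ∪ (Set.Ioc (R) (R + d) ∪ Set.Ioc (-R + d) (-R)) := by
      rintro _ ⟨a, ⟨haS, ha1, ha2⟩, rfl⟩
      by_cases h1 : R < a + d
      · exact Or.inr (Or.inl ⟨h1, by simpa using ha2⟩)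
      by_cases h2 : a + d ≤ -R
      · exact Or.inr (Or.inr ⟨by simpa using ha1, h2⟩)
      · exact Or.inl ⟨⟨a, haS, rfl⟩, not_le.1 h2, not_lt.1 h1⟩
    have hvol : volume (S ∩ I) ≤ volume ((fun s => s + d) '' S ∩ I) + ENNReal.ofReal Δ := by
      rw [← himg (S ∩ I)]
      refine (measure_mono hsub).trans ((measure_union_le _ _).trans ?_)
      gcongr
      refine (measure_union_le _ _).trans ?_
      rw [Real.volume_Ioc, Real.volume_Ioc]
      have := abs_le.1 hd
      rcases le_total 0 d with h0 | h0
      · rw [ENNReal.ofReal_of_nonpos (p := -R - (-R + d)) (by linarith), add_zero]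
        exact ENNReal.ofReal_le_ofReal (by linarith)
      · rw [ENNReal.ofReal_of_nonpos (p := R + d - R) (by linarith), zero_add]
        exact ENNReal.ofReal_le_ofReal (by linarith)
    have hPS : P S ≤ P ((fun s => s + d) '' S) + ENNReal.ofReal δ := by
      rw [hP, Measure.smul_apply, Measure.smul_apply, Measure.restrict_apply hS,
        Measure.restrict_apply hSd, smul_eq_mul, smul_eq_mul]
      calc _ ≤ ENNReal.ofReal (δ / Δ) * (volume ((fun s => s + d) '' S ∩ I) + ENNReal.ofReal Δ) := by
            gcongr
        _ = _ := by
            rw [mul_add, ← ENNReal.ofReal_mul (by positivity), div_mul_cancel₀ _ hΔ.ne']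
    refine hPS.trans ?_
    gcongr
    apply le_mul_of_one_le_left (zero_le)
    rw [ENNReal.one_le_ofReal]
    exact Real.one_le_exp hε.le
  refine (iInf_le_of_le P (iInf_le_of_le hprob (iInf_le _ hDP))).trans ?_
  rw [hP, lintegral_smul_measure, smul_eq_mul, ← ofReal_integral_eq_lintegral_ofReal
    ((by fun_prop : Continuous fun x : ℝ => x ^ 2).integrableOn_Ioc)
    (Eventually.of_forall fun x => sq_nonneg x), ← ENNReal.ofReal_mul (by positivity),
    ← intervalIntegral.integral_of_le (by linarith), integral_pow]
  apply le_of_eq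
  congr 1
  have h1 : Δ = 2 * δ * R := by rw [hR]; field_simp
  rw [h1]
  push_cast
  field_simp
  ring

/-- For fixed δ ∈ (0, 1/2) and Δ > 0, as ε → 0⁺ the minimum noise
power satisfies liminf ≥ (Δ²/12)(1/δ − 1)(1/δ − 2) and limsup ≤ Δ²/(12δ²); the
ratio of the limiting lower and upper bounds is (1 − δ)(1 − 2δ). -/
theorem VoptL2_asymptotics_eps_to_zero
    (δ Δ : ℝ) (hδ0 : 0 < δ) (hδ : δ < 1 / 2) (hΔ : 0 < Δ) :
    Filter.liminf (fun ε : ℝ => VoptL2 ε δ Δ) (nhdsWithin 0 (Set.Ioi 0))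
        ≥ ENNReal.ofReal ((Δ ^ 2 / 12) * (1 / δ - 1) * (1 / δ - 2))
      ∧ Filter.limsup (fun ε : ℝ => VoptL2 ε δ Δ) (nhdsWithin 0 (Set.Ioi 0))
        ≤ ENNReal.ofReal (Δ ^ 2 / (12 * δ ^ 2))
      ∧ ((Δ ^ 2 / 12) * (1 / δ - 1) * (1 / δ - 2)) / (Δ ^ 2 / (12 * δ ^ 2))
        = (1 - δ) * (1 - 2 * δ) := by
  refine ⟨?_, ?_, ?_⟩
  · set F : ℝ → ℝ := fun ε => (Δ ^ 2 / 12) * (1 / (δ + (Real.exp ε - 1)) - 1) *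
      (1 / (δ + (Real.exp ε - 1)) - 2) with hF
    have hc : Continuous fun ε : ℝ => δ + (Real.exp ε - 1) := by fun_prop
    have hF0 : ContinuousAt F 0 := by
      have : ContinuousAt (fun ε : ℝ => 1 / (δ + (Real.exp ε - 1))) 0 :=
        continuousAt_const.div hc.continuousAt (by simp [hδ0.ne'])
      exact (continuousAt_const.mul (this.sub continuousAt_const)).mul
        (this.sub continuousAt_const)
    have hlim : Tendsto (fun ε => ENNReal.ofReal (F ε)) (nhdsWithin 0 (Set.Ioi 0))
        (𝓝 (ENNReal.ofReal (F 0))) :=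
      (ENNReal.tendsto_ofReal hF0).mono_left nhdsWithin_le_nhds
    have e0 : F 0 = (Δ ^ 2 / 12) * (1 / δ - 1) * (1 / δ - 2) := by simp [hF]
    rw [← e0, ← hlim.liminf_eq]
    refine liminf_le_liminf ?_
    have hsmall : ∀ᶠ ε in nhdsWithin (0:ℝ) (Set.Ioi 0), δ + (Real.exp ε - 1) < 1 / 2 :=
      (hc.continuousAt.eventually_lt (continuousAt_const (y := (1 / 2 : ℝ)))
        (by simpa using hδ)).filter_mono nhdsWithin_le_nhds
    filter_upwards [hsmall, self_mem_nhdsWithin] with ε h1 h2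
    have h2' : (0:ℝ) < ε := h2
    refine le_iInf fun P => le_iInf fun hP => le_iInf fun hDP => ?_
    have : 1 ≤ Real.exp ε := Real.one_le_exp h2'.le
    exact lower_bound (by linarith) h1 hΔ P (interval_mass h2' hδ0 hΔ P hDP)
  · refine (limsup_le_limsup (v := fun _ => ENNReal.ofReal (Δ ^ 2 / (12 * δ ^ 2))) ?_).trans
      (by simp)
    filter_upwards [self_mem_nhdsWithin] with ε h2
    exact upper_bound h2 hδ0 hΔ
  · field_simp
end

section
/- Fix ε > 0 and Δ > 0. Then the minimum noise power satisfies liminf_{δ → 0⁺} V_opt^{L2}(ε, δ, Δ) ≥ (1 + e^ε)·Δ²/(e^ε − 1)² and limsup_{δ → 0⁺} V_opt^{L2}(ε, δ, Δ) ≤ 2Δ²/ε², so the multiplicative gap between these limiting lower and upper bounds is ε²(1 + e^ε)/(2(e^ε − 1)²) = 1 − ε/2 + O(ε²). -/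
open MeasureTheory Real Filter Topology

lemma aux_pointwise (t : ℝ) (ht : 0 ≤ t) (K : ℕ) :
    ∑ k ∈ Finset.range K, (if (k:ℝ) + 1 ≤ t then (2 * (k:ℝ) + 1) else 0) ≤ t ^ 2 := by
  have hs : ∀ K : ℕ, ∑ k ∈ Finset.range K, (2 * (k:ℝ) + 1) = (K:ℝ) ^ 2 := by
    intro K
    induction K with
    | zero => simp
    | succ n ih => rw [Finset.sum_range_succ, ih]; push_cast; ring
  induction K with
  | zero => simp; positivity
  | succ n ih =>
    by_cases h : (n:ℝ) + 1 ≤ t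
    · calc _ ≤ ∑ k ∈ Finset.range (n+1), (2 * (k:ℝ) + 1) := by
            apply Finset.sum_le_sum
            intro i _
            split_ifs
            · exact le_rfl
            · positivity
        _ = ((n:ℝ) + 1) ^ 2 := by rw [hs]; push_cast; ring
        _ ≤ t ^ 2 := by gcongr
    · rw [Finset.sum_range_succ, if_neg h]; linarith

lemma aux_hassum (b : ℝ) (h0 : 0 < b) (h1 : b < 1) :
    HasSum (fun k : ℕ => (2 * (k:ℝ) + 1) * b ^ (k + 1)) (b * (1 + b) / (1 - b) ^ 2) := by
  have hb : ‖b‖ < 1 := by rw [Real.norm_eq_abs, abs_of_pos h0]; exact h1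
  have A := (hasSum_coe_mul_geometric_of_norm_lt_one hb).mul_left (2 * b)
  have B := (hasSum_geometric_of_lt_one h0.le h1).mul_left b
  have hne : 1 - b ≠ 0 := by linarith
  have e1 : (fun k : ℕ => (2 * (k:ℝ) + 1) * b ^ (k + 1))
      = fun k : ℕ => 2 * b * ((k:ℝ) * b ^ k) + b * b ^ k := by
    ext k; ring
  have e2 : b * (1 + b) / (1 - b) ^ 2 = 2 * b * (b / (1 - b) ^ 2) + b * (1 - b)⁻¹ := by
    field_simp; ring
  rw [e1, e2]
  exact A.add B

lemma aux_tail (ε δ Δ : ℝ) (hΔ : 0 < Δ) (hδ : 0 ≤ δ) (P : Measure ℝ)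
    [IsProbabilityMeasure P] (h : SatisfiesDP ε δ Δ P) (t : ℝ) (ht : 0 ≤ t) :
    P.real {x | t ≤ |x|} ≤ Real.exp ε * P.real {x | t + Δ ≤ |x|} + 2 * δ := by
  have h1 := h Δ (abs_of_pos hΔ).le (Set.Ici t) measurableSet_Ici
  have h2 := h (-Δ) (by rw [abs_neg, abs_of_pos hΔ]) (Set.Iic (-t)) measurableSet_Iic
  rw [Set.image_add_const_Ici] at h1
  rw [Set.image_add_const_Iic] at h2
  have key : ∀ A B : Set ℝ, P A ≤ ENNReal.ofReal (Real.exp ε) * P B + ENNReal.ofReal δ →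
      P.real A ≤ Real.exp ε * P.real B + δ := by
    intro A B hAB
    have hne : ENNReal.ofReal (Real.exp ε) * P B ≠ ⊤ :=
      ENNReal.mul_ne_top ENNReal.ofReal_ne_top (measure_ne_top _ _)
    have := ENNReal.toReal_mono (ENNReal.add_ne_top.2 ⟨hne, ENNReal.ofReal_ne_top⟩) hAB
    rw [ENNReal.toReal_add hne ENNReal.ofReal_ne_top, ENNReal.toReal_mul,
      ENNReal.toReal_ofReal (Real.exp_pos _).le, ENNReal.toReal_ofReal hδ] at this
    exact this
  have k1 := key _ _ h1
  have k2 := key _ _ h2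
  have e1 : {x : ℝ | t ≤ |x|} = Set.Ici t ∪ Set.Iic (-t) := by
    ext x; simp [le_abs, le_neg]
  have e2 : {x : ℝ | t + Δ ≤ |x|} = Set.Ici (t + Δ) ∪ Set.Iic (-t + -Δ) := by
    ext x
    simp only [le_abs, Set.mem_ofPred_eq, Set.mem_union, Set.mem_Ici, Set.mem_Iic]
    constructor <;> rintro (h | h) <;> first | (left; linarith) | (right; linarith)
  have hd : Disjoint (Set.Ici (t + Δ)) (Set.Iic (-t + -Δ)) := by
    rw [Set.disjoint_left]
    intro x hx hx'
    simp only [Set.mem_Ici, Set.mem_Iic] at hx hx'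
    linarith
  rw [e1, e2, measureReal_union hd measurableSet_Iic]
  have := measureReal_union_le (μ := P) (Set.Ici t) (Set.Iic (-t))
  linarith

lemma aux_tail_k (ε δ Δ : ℝ) (hε : 0 < ε) (hΔ : 0 < Δ) (hδ : 0 ≤ δ) (P : Measure ℝ)
    [IsProbabilityMeasure P] (h : SatisfiesDP ε δ Δ P) (k : ℕ) :
    Real.exp (-ε) ^ k - 2 * k * δ ≤ P.real {x | k * Δ ≤ |x|} := by
  induction k with
  | zero => simp
  | succ n ih =>
    have := aux_tail ε δ Δ hΔ hδ P h (n * Δ) (by positivity)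
    have e : (((n + 1 : ℕ) : ℝ)) * Δ = n * Δ + Δ := by push_cast; ring
    rw [e]
    set X := P.real {x | n * Δ ≤ |x|}
    set Y := P.real {x | n * Δ + Δ ≤ |x|}
    have hb : Real.exp (-ε) * Real.exp ε = 1 := by rw [← Real.exp_add]; simp
    have hb1 : Real.exp (-ε) ≤ 1 := by simpa using hε.le
    have hb0 := Real.exp_pos (-ε)
    set b := Real.exp (-ε)
    have h1 : b * X ≤ Y + b * (2 * δ) := by
      have := mul_le_mul_of_nonneg_left this hb0.le
      have e : b * (Real.exp ε * Y + 2 * δ) = (b * Real.exp ε) * Y + b * (2 * δ) := by ring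
      rw [e, hb] at this; linarith
    have h2 := mul_le_mul_of_nonneg_left ih hb0.le
    have h3 : b * (2 * n * δ + 2 * δ) ≤ 1 * (2 * n * δ + 2 * δ) :=
      mul_le_mul_of_nonneg_right hb1 (by positivity)
    push_cast
    rw [pow_succ]
    nlinarith

lemma aux_lower (ε δ Δ : ℝ) (hε : 0 < ε) (hΔ : 0 < Δ) (hδ : 0 ≤ δ) (P : Measure ℝ)
    [IsProbabilityMeasure P] (h : SatisfiesDP ε δ Δ P) (K : ℕ) :
    ENNReal.ofReal (Δ ^ 2 * ∑ k ∈ Finset.range K,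
      (2 * (k:ℝ) + 1) * (Real.exp (-ε) ^ (k + 1) - 2 * ((k + 1 : ℕ) : ℝ) * δ))
      ≤ ∫⁻ x : ℝ, ENNReal.ofReal (x ^ 2) ∂P := by
  have hm : ∀ t : ℝ, MeasurableSet {x : ℝ | t ≤ |x|} := fun t =>
    measurableSet_le measurable_const (by fun_prop)
  let g : ℝ → ℝ := fun x => Δ ^ 2 * ∑ k ∈ Finset.range K,
    (2 * (k:ℝ) + 1) * Set.indicator {x : ℝ | ((k + 1 : ℕ) : ℝ) * Δ ≤ |x|} 1 x
  have hint : ∀ k : ℕ, Integrable (fun x => (2 * (k:ℝ) + 1) *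
      Set.indicator {x : ℝ | ((k + 1 : ℕ) : ℝ) * Δ ≤ |x|} (1 : ℝ → ℝ) x) P := fun k =>
    ((integrable_const (1:ℝ)).indicator (hm _)).const_mul _
  have hg : Integrable g P := (integrable_finsetSum _ fun k _ => hint k).const_mul _
  have hg0 : ∀ x, 0 ≤ g x := fun x => by
    refine mul_nonneg (by positivity) (Finset.sum_nonneg fun k _ => mul_nonneg (by positivity) ?_)
    exact Set.indicator_nonneg (fun _ _ => zero_le_one) _
  have hgle : ∀ x, g x ≤ x ^ 2 := fun x => by
    have := aux_pointwise (|x| / Δ) (by positivity) K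
    have h2 : Δ ^ 2 * (|x| / Δ) ^ 2 = x ^ 2 := by
      rw [div_pow, sq_abs]; field_simp
    rw [← h2]
    refine mul_le_mul_of_nonneg_left (le_trans (le_of_eq ?_) this) (by positivity)
    refine Finset.sum_congr rfl fun k _ => ?_
    simp only [Set.indicator_apply, Set.mem_ofPred_eq, le_div_iff₀ hΔ, Nat.cast_add, Nat.cast_one]
    split_ifs <;> simp
  calc _ ≤ ENNReal.ofReal (∫ x, g x ∂P) := by
        apply ENNReal.ofReal_le_ofReal
        rw [integral_const_mul, integral_finsetSum _ fun k _ => hint k]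
        refine mul_le_mul_of_nonneg_left (Finset.sum_le_sum fun k _ => ?_) (by positivity)
        rw [integral_const_mul, integral_indicator_one (hm _)]
        exact mul_le_mul_of_nonneg_left (aux_tail_k ε δ Δ hε hΔ hδ P h (k+1)) (by positivity)
    _ = ∫⁻ x, ENNReal.ofReal (g x) ∂P :=
        ofReal_integral_eq_lintegral_ofReal hg (ae_of_all _ hg0)
    _ ≤ _ := lintegral_mono fun x => ENNReal.ofReal_le_ofReal (hgle x)

lemma aux_int0 (c : ℝ) (hc : 0 < c) :
    ∫ x : ℝ, c / 2 * Real.exp (-(c * |x|)) = 1 := by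
  rw [integral_comp_abs (f := fun x => c / 2 * Real.exp (-(c * x))), integral_const_mul]
  have := Real.integral_rpow_mul_exp_neg_mul_Ioi (a := 1) (r := c) one_pos hc
  simp only [sub_self, Real.rpow_zero, one_mul, Real.rpow_one, Real.Gamma_one, mul_one] at this
  rw [this]
  field_simp

lemma aux_int2 (c : ℝ) (hc : 0 < c) :
    ∫ x : ℝ, c / 2 * Real.exp (-(c * |x|)) * x ^ 2 = 2 / c ^ 2 := by
  have e : (fun x : ℝ => c / 2 * Real.exp (-(c * |x|)) * x ^ 2)
      = fun x => (fun y => c / 2 * (y ^ (2:ℕ) * Real.exp (-(c * y)))) |x| := by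
    ext x; simp only [sq_abs]; ring
  rw [e, integral_comp_abs (f := fun y => c / 2 * (y ^ (2:ℕ) * Real.exp (-(c * y)))),
    integral_const_mul]
  have := Real.integral_rpow_mul_exp_neg_mul_Ioi (a := 3) (r := c) (by norm_num) hc
  have g : Real.Gamma 3 = 2 := by
    rw [show (3:ℝ) = ((2:ℕ):ℝ) + 1 by norm_num, Real.Gamma_nat_eq_factorial]
    norm_num [Nat.factorial]
  rw [g, show (3:ℝ) - 1 = ((2:ℕ):ℝ) by norm_num, show (3:ℝ) = ((3:ℕ):ℝ) by norm_num] at this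
  simp only [Real.rpow_natCast] at this
  rw [this]
  field_simp

lemma aux_upper (ε δ Δ : ℝ) (hε : 0 < ε) (hΔ : 0 < Δ) :
    VoptL2 ε δ Δ ≤ ENNReal.ofReal (2 * Δ ^ 2 / ε ^ 2) := by
  set c : ℝ := ε / Δ with hcdef
  have hc : 0 < c := by positivity
  let f : ℝ → ℝ := fun x => c / 2 * Real.exp (-(c * |x|))
  have hf0 : ∀ x, 0 ≤ f x := fun x => by positivity
  have hfm : Measurable f := by fun_prop
  have hfm' : Measurable fun x => ENNReal.ofReal (f x) := hfm.ennreal_ofReal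
  have i0 : ∫ x, f x = 1 := aux_int0 c hc
  have i2 : ∫ x, f x * x ^ 2 = 2 / c ^ 2 := aux_int2 c hc
  have I0 : Integrable f := Integrable.of_integral_ne_zero (by rw [i0]; exact one_ne_zero)
  have I2 : Integrable (fun x => f x * x ^ 2) :=
    Integrable.of_integral_ne_zero (by rw [i2]; positivity)
  let P : Measure ℝ := volume.withDensity fun x => ENNReal.ofReal (f x)
  have hP : IsProbabilityMeasure P := ⟨by
    rw [withDensity_apply _ MeasurableSet.univ, Measure.restrict_univ,
      ← ofReal_integral_eq_lintegral_ofReal I0 (ae_of_all _ hf0), i0, ENNReal.ofReal_one]⟩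
  have hDP : SatisfiesDP ε δ Δ P := by
    intro d hd S hS
    refine le_trans ?_ le_self_add
    have himg : (fun s => s + d) '' S = (fun s => s - d) ⁻¹' S := by
      ext x
      constructor
      · rintro ⟨y, hy, rfl⟩
        simpa using hy
      · intro hx
        exact ⟨x - d, hx, by simp⟩
    have hS' : MeasurableSet ((fun s => s + d) '' S) := by
      rw [himg]; exact (measurable_id.sub_const d) hS
    have hpre : (fun s => s + d) ⁻¹' ((fun s => s + d) '' S) = S :=
      Set.preimage_image_eq _ (add_left_injective d)
    have hshift : P ((fun s => s + d) '' S) = ∫⁻ x in S, ENNReal.ofReal (f (x + d)) := by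
      rw [withDensity_apply _ hS']
      have := setLIntegral_map (μ := (volume : Measure ℝ)) hS' hfm' (measurable_add_const d)
      rw [map_add_right_eq_self, hpre] at this
      exact this
    rw [hshift, withDensity_apply _ hS, ← lintegral_const_mul _ (by fun_prop)]
    refine lintegral_mono fun x => ?_
    rw [← ENNReal.ofReal_mul (Real.exp_pos _).le]
    apply ENNReal.ofReal_le_ofReal
    have e : Real.exp ε * f (x + d) = c / 2 * Real.exp (ε + -(c * |x + d|)) := by
      simp only [f]; rw [Real.exp_add]; ring
    rw [e]
    refine mul_le_mul_of_nonneg_left (Real.exp_le_exp.2 ?_) (by positivity)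
    have h1 : |x + d| ≤ |x| + Δ := (abs_add_le x d).trans (by linarith)
    have h2 : c * |x + d| ≤ c * (|x| + Δ) := mul_le_mul_of_nonneg_left h1 hc.le
    have h3 : c * Δ = ε := by rw [hcdef]; field_simp
    linarith
  refine (iInf_le_of_le P (iInf_le_of_le hP (iInf_le_of_le hDP le_rfl))).trans ?_
  rw [lintegral_withDensity_eq_lintegral_mul _ hfm' (by fun_prop)]
  have e : ∀ x, ((fun x => ENNReal.ofReal (f x)) * fun x => ENNReal.ofReal (x ^ 2)) x
      = ENNReal.ofReal (f x * x ^ 2) := fun x => by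
    rw [Pi.mul_apply, ENNReal.ofReal_mul (hf0 x)]
  rw [lintegral_congr e, ← ofReal_integral_eq_lintegral_ofReal I2
    (ae_of_all _ fun x => mul_nonneg (hf0 x) (sq_nonneg x)), i2]
  apply le_of_eq
  congr 1
  rw [hcdef]; field_simp

lemma aux_liminf (ε Δ : ℝ) (hε : 0 < ε) (hΔ : 0 < Δ) :
    ENNReal.ofReal ((1 + Real.exp ε) * Δ ^ 2 / (Real.exp ε - 1) ^ 2)
      ≤ Filter.liminf (fun δ : ℝ => VoptL2 ε δ Δ) (nhdsWithin 0 (Set.Ioi 0)) := by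
  have hb0 : 0 < Real.exp (-ε) := Real.exp_pos _
  have hb1 : Real.exp (-ε) < 1 := by simpa using hε
  have hK : ∀ K : ℕ, ENNReal.ofReal (Δ ^ 2 * ∑ k ∈ Finset.range K,
      (2 * (k:ℝ) + 1) * Real.exp (-ε) ^ (k + 1))
      ≤ Filter.liminf (fun δ : ℝ => VoptL2 ε δ Δ) (nhdsWithin 0 (Set.Ioi 0)) := by
    intro K
    have hcont : Continuous fun δ : ℝ => ENNReal.ofReal (Δ ^ 2 * ∑ k ∈ Finset.range K,
      (2 * (k:ℝ) + 1) * (Real.exp (-ε) ^ (k + 1) - 2 * ((k + 1 : ℕ) : ℝ) * δ)) :=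
      ENNReal.continuous_ofReal.comp (by fun_prop)
    have ht := (hcont.tendsto 0).mono_left (nhdsWithin_le_nhds (s := Set.Ioi 0))
    simp only [mul_zero, sub_zero] at ht
    rw [← ht.liminf_eq]
    refine liminf_le_liminf ?_
    filter_upwards [self_mem_nhdsWithin] with δ hδ
    refine le_iInf fun P => le_iInf fun hP => le_iInf fun hDP => ?_
    exact aux_lower ε δ Δ hε hΔ (le_of_lt hδ) P hDP K
  have hs := ((aux_hassum _ hb0 hb1).tendsto_sum_nat.const_mul (Δ ^ 2))
  have ht := (ENNReal.continuous_ofReal.tendsto _).comp hs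
  have e : (1 + Real.exp ε) * Δ ^ 2 / (Real.exp ε - 1) ^ 2
      = Δ ^ 2 * (Real.exp (-ε) * (1 + Real.exp (-ε)) / (1 - Real.exp (-ε)) ^ 2) := by
    have h1 : Real.exp ε - 1 ≠ 0 := by
      have := Real.one_lt_exp_iff.2 hε
      linarith
    have h0 := (Real.exp_pos ε).ne'
    rw [Real.exp_neg]
    have h2 : 1 - (Real.exp ε)⁻¹ = (Real.exp ε - 1) / Real.exp ε := by field_simp
    rw [h2]
    field_simp
    ring
  rw [e]
  exact le_of_tendsto' ht hK

/-- For fixed ε > 0 and Δ > 0, as δ → 0⁺ the minimum noise power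
satisfies liminf ≥ (1 + e^ε)Δ²/(e^ε − 1)² and limsup ≤ 2Δ²/ε², with multiplicative
gap ε²(1 + e^ε)/(2(e^ε − 1)²). -/
theorem VoptL2_asymptotics_delta_to_zero
    (ε Δ : ℝ) (hε : 0 < ε) (hΔ : 0 < Δ) :
    Filter.liminf (fun δ : ℝ => VoptL2 ε δ Δ) (nhdsWithin 0 (Set.Ioi 0))
        ≥ ENNReal.ofReal ((1 + Real.exp ε) * Δ ^ 2 / (Real.exp ε - 1) ^ 2)
      ∧ Filter.limsup (fun δ : ℝ => VoptL2 ε δ Δ) (nhdsWithin 0 (Set.Ioi 0))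
        ≤ ENNReal.ofReal (2 * Δ ^ 2 / ε ^ 2)
      ∧ ((1 + Real.exp ε) * Δ ^ 2 / (Real.exp ε - 1) ^ 2) / (2 * Δ ^ 2 / ε ^ 2)
        = ε ^ 2 * (1 + Real.exp ε) / (2 * (Real.exp ε - 1) ^ 2) := by
  refine ⟨aux_liminf ε Δ hε hΔ, ?_, ?_⟩
  · exact limsup_le_of_le (by isBoundedDefault)
      (Eventually.of_forall fun δ => aux_upper ε δ Δ hε hΔ)
  · have h1 : Real.exp ε - 1 ≠ 0 := by
      have := Real.one_lt_exp_iff.2 hε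
      linarith
    field_simp
end
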